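/- Let F be a monotone hazard rate probability distribution supported on the non-negative reals with density f and strictly increasing virtual valuation φ. Then the robustness of the optimal-consistency mechanism is at most 4e; that is, R^s_F + R^h_F ≤ 4e · R^s_F, where R^s_F = ∫₀^∞ φ⁻¹(z)·(1−F(φ⁻¹(z)))·f(z) dz and R^h_F = ∫₀^∞ z·F(φ⁻¹(z))·f(z) dz. -/

import Mathlib

open MeasureTheory Real Set

/-!
For a monotone hazard rate distribution the survival function `S = 1 - F` is log-concave. The proof
uses this twice.

* As `S 0 = 1`, log-concavity gives `S (2z) ≤ S z ^ 2`; integrating over `z` turns this into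
  `E[X] ≤ 2 E[min (X, X')] = 4 ∫ z S(z) f(z) dz` for two independent copies `X`, `X'`.
* The tangent to `log S` at `p = φ⁻¹(z)` has slope `-1 / (p - z)`, because `φ(p) = z` means
  `p - z = S p / f p`. Hence `S z ≤ e S (φ⁻¹ z)`.

With `A = ∫ z S(φ⁻¹ z) f(z) dz`, these give `E[X] ≤ 4e A`, while `R^h = E[X] - A` and `A ≤ R^s`.
-/

section Survival

/-- The survival function `z ↦ ∫_z^∞ f` of a density `f`; it equals `1 - F` on `[0, ∞)` when `f`
is a probability density there with distribution function `F`. -/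
noncomputable def survival (f : ℝ → ℝ) (z : ℝ) : ℝ :=
  ∫ t in Ioi z, f t

/-- The hazard rate `f / (1 - F)` of a density `f`. -/
noncomputable def hazardRate (f : ℝ → ℝ) (z : ℝ) : ℝ :=
  f z / survival f z

/-- Myerson's virtual valuation `z - (1 - F z) / f z` of a density `f`. -/
noncomputable def virtualValue (f : ℝ → ℝ) (z : ℝ) : ℝ :=
  z - survival f z / f z

variable {f : ℝ → ℝ} {a z : ℝ}

lemma survival_eq_sub_intervalIntegral (hint : IntegrableOn f (Ioi a)) (haz : a ≤ z) :
    survival f z = survival f a - ∫ t in a..z, f t :=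
  eq_sub_of_add_eq' (intervalIntegral.integral_interval_add_Ioi hint
    (hint.mono_set (Ioi_subset_Ioi haz)))

lemma continuousOn_survival (hint : IntegrableOn f (Ioi a)) :
    ContinuousOn (survival f) (Ici a) :=
  hint.continuousOn_Ici_primitive_Ioi

lemma hasDerivAt_survival (hint : IntegrableOn f (Ioi a)) (haz : a < z) (hcont : ContinuousAt f z) :
    HasDerivAt (survival f) (-f z) z := by
  have hmeas : StronglyMeasurableAtFilter f (nhds z) :=
    ⟨Ioi a, Ioi_mem_nhds haz, hint.aestronglyMeasurable⟩
  have hint_Ioc : IntervalIntegrable f volume a z :=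
    (intervalIntegrable_iff_integrableOn_Ioc_of_le haz.le).2 (hint.mono_set Ioc_subset_Ioi_self)
  have hprimitive := intervalIntegral.integral_hasDerivAt_right hint_Ioc hmeas hcont
  refine (hprimitive.const_sub (survival f a)).congr_of_eventuallyEq ?_
  filter_upwards [Ioi_mem_nhds haz] with t ht
    using survival_eq_sub_intervalIntegral hint (le_of_lt ht)

lemma tendsto_survival_atTop : Filter.Tendsto (survival f) Filter.atTop (nhds 0) :=
  tendsto_integral_Ioi_zero Filter.tendsto_id

lemma survival_nonneg (hnonneg : ∀ t ∈ Ioi a, 0 ≤ f t) (haz : a ≤ z) : 0 ≤ survival f z :=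
  setIntegral_nonneg measurableSet_Ioi fun t ht => hnonneg t (Ioi_subset_Ioi haz ht)

lemma survival_pos (hint : IntegrableOn f (Ioi a)) (hpos : ∀ t ∈ Ioi a, 0 < f t) (haz : a ≤ z) :
    0 < survival f z := by
  have hpos_tail : ∀ t ∈ Ioi z, 0 < f t := fun t ht => hpos t (Ioi_subset_Ioi haz ht)
  refine (setIntegral_pos_iff_support_of_nonneg_ae ?_
    (hint.mono_set (Ioi_subset_Ioi haz))).2 ?_
  · filter_upwards [ae_restrict_mem measurableSet_Ioi] with t ht using (hpos_tail t ht).le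
  · have hsupport : Ioi z ⊆ Function.support f := fun t ht => (hpos_tail t ht).ne'
    rw [inter_eq_right.2 hsupport, Real.volume_Ioi]
    exact ENNReal.zero_lt_top

lemma antitoneOn_survival (hint : IntegrableOn f (Ioi a)) (hnonneg : ∀ t ∈ Ioi a, 0 ≤ f t) :
    AntitoneOn (survival f) (Ici a) := by
  intro x hx y _ hxy
  refine setIntegral_mono_set (hint.mono_set (Ioi_subset_Ioi hx)) ?_
    (Ioi_subset_Ioi hxy).eventuallyLE
  filter_upwards [ae_restrict_mem measurableSet_Ioi] with t ht
    using hnonneg t (Ioi_subset_Ioi hx ht)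

lemma norm_survival_le (hint : IntegrableOn f (Ioi a)) (hnonneg : ∀ t ∈ Ioi a, 0 ≤ f t)
    (haz : a ≤ z) : ‖survival f z‖ ≤ survival f a := by
  rw [norm_of_nonneg (survival_nonneg hnonneg haz)]
  exact antitoneOn_survival hint hnonneg self_mem_Ici haz haz

lemma mul_survival_le (hmean : IntegrableOn (fun t => t * f t) (Ioi 0))
    (hnonneg : ∀ t ∈ Ioi (0 : ℝ), 0 ≤ f t) (hz : 0 ≤ z) :
    z * survival f z ≤ ∫ t in Ioi 0, t * f t := by
  have hsubset : Ioi z ⊆ Ioi 0 := Ioi_subset_Ioi hz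
  calc z * survival f z = ∫ t in Ioi z, z * f t := (integral_const_mul _ _).symm
    _ ≤ ∫ t in Ioi z, t * f t := by
      refine integral_mono_of_nonneg ?_ (hmean.mono_set hsubset) ?_ <;>
        filter_upwards [ae_restrict_mem measurableSet_Ioi] with t ht
      · exact mul_nonneg hz (hnonneg t (hsubset ht))
      · exact mul_le_mul_of_nonneg_right (le_of_lt ht) (hnonneg t (hsubset ht))
    _ ≤ ∫ t in Ioi 0, t * f t := by
      refine setIntegral_mono_set hmean ?_ hsubset.eventuallyLE
      filter_upwards [ae_restrict_mem measurableSet_Ioi] with t ht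
        using mul_nonneg (le_of_lt ht) (hnonneg t ht)

end Survival

section TailIntegral

variable {g : ℝ → ℝ} {a : ℝ}

lemma setIntegral_Ioi_indicator_Iio_const {z : ℝ} (haz : a ≤ z) (c : ℝ) :
    ∫ t in Ioi a, (Iio z).indicator (fun _ => c) t = (z - a) * c := by
  rw [setIntegral_indicator measurableSet_Iio, Ioi_inter_Iio, setIntegral_const,
    Real.volume_real_Ioo_of_le haz, smul_eq_mul]

lemma indicator_Ioi_eq_indicator_Iio_const (g : ℝ → ℝ) (z : ℝ) :
    (fun t => (Ioi t).indicator g z) = (Iio z).indicator fun _ => g z := by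
  ext t
  simp only [indicator_apply, mem_Ioi, mem_Iio]

lemma setIntegral_Ioi_indicator_Ioi {t : ℝ} (hat : a ≤ t) :
    ∫ z in Ioi a, (Ioi t).indicator g z = survival g t := by
  rw [setIntegral_indicator measurableSet_Ioi, Ioi_inter_Ioi, sup_eq_right.2 hat, survival]

lemma integrable_indicator_Ioi_prod (hg : AEStronglyMeasurable g (volume.restrict (Ioi a)))
    (hint : IntegrableOn (fun z => (z - a) * g z) (Ioi a)) :
    Integrable (Function.uncurry fun t z => (Ioi t).indicator g z)
      ((volume.restrict (Ioi a)).prod (volume.restrict (Ioi a))) := by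
  have hmeas : AEStronglyMeasurable (Function.uncurry fun t z => (Ioi t).indicator g z)
      ((volume.restrict (Ioi a)).prod (volume.restrict (Ioi a))) :=
    hg.comp_snd.indicator (measurableSet_lt measurable_fst measurable_snd)
  refine (integrable_prod_iff' hmeas).2 ⟨.of_forall fun z => ?_, ?_⟩
  · change Integrable (fun t => (Ioi t).indicator g z) _
    rw [indicator_Ioi_eq_indicator_Iio_const, integrable_indicator_iff measurableSet_Iio]
    refine integrableOn_const ?_
    rw [Measure.restrict_apply measurableSet_Iio, inter_comm, Ioi_inter_Iio]
    exact measure_Ioo_lt_top.ne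
  · refine IntegrableOn.congr_fun hint.norm (fun z hz => ?_) measurableSet_Ioi
    have haz : a ≤ z := le_of_lt hz
    simp only [Function.uncurry_apply_pair, norm_indicator_eq_indicator_norm]
    rw [indicator_Ioi_eq_indicator_Iio_const fun z => ‖g z‖,
      setIntegral_Ioi_indicator_Iio_const haz, norm_mul, norm_of_nonneg (sub_nonneg.2 haz)]

lemma integrableOn_survival (hg : AEStronglyMeasurable g (volume.restrict (Ioi a)))
    (hint : IntegrableOn (fun z => (z - a) * g z) (Ioi a)) :
    IntegrableOn (survival g) (Ioi a) :=
  IntegrableOn.congr_fun (integrable_indicator_Ioi_prod hg hint).integral_prod_left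
    (fun _ ht => setIntegral_Ioi_indicator_Ioi (le_of_lt ht)) measurableSet_Ioi

lemma integral_survival (hg : AEStronglyMeasurable g (volume.restrict (Ioi a)))
    (hint : IntegrableOn (fun z => (z - a) * g z) (Ioi a)) :
    ∫ z in Ioi a, survival g z = ∫ z in Ioi a, (z - a) * g z := by
  calc ∫ t in Ioi a, survival g t = ∫ t in Ioi a, ∫ z in Ioi a, (Ioi t).indicator g z :=
      setIntegral_congr_fun measurableSet_Ioi fun _ ht =>
        (setIntegral_Ioi_indicator_Ioi (le_of_lt ht)).symm
    _ = ∫ z in Ioi a, ∫ t in Ioi a, (Ioi t).indicator g z :=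
      integral_integral_swap (integrable_indicator_Ioi_prod hg hint)
    _ = ∫ z in Ioi a, (z - a) * g z :=
      setIntegral_congr_fun measurableSet_Ioi fun z hz => by
        simp only [indicator_Ioi_eq_indicator_Iio_const,
          setIntegral_Ioi_indicator_Iio_const (le_of_lt hz)]

end TailIntegral

section ReservePrice

variable {f w ψ : ℝ → ℝ} {a : ℝ}

lemma aestronglyMeasurable_survival_comp (hint : IntegrableOn f (Ioi a))
    (hnonneg : ∀ t ∈ Ioi a, 0 ≤ f t) (hψ : MonotoneOn ψ (Ioi a))
    (hψ_maps : MapsTo ψ (Ioi a) (Ici a)) :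
    AEStronglyMeasurable (fun z => survival f (ψ z)) (volume.restrict (Ioi a)) := by
  have hanti : AntitoneOn (fun z => survival f (ψ z)) (Ioi a) := fun x hx y hy hxy =>
    antitoneOn_survival hint hnonneg (hψ_maps hx) (hψ_maps hy) (hψ hx hy hxy)
  exact (aemeasurable_restrict_of_antitoneOn measurableSet_Ioi hanti).aestronglyMeasurable

lemma integrableOn_survival_comp_mul (hint : IntegrableOn f (Ioi a))
    (hnonneg : ∀ t ∈ Ioi a, 0 ≤ f t) (hw : IntegrableOn w (Ioi a)) (hψ : MonotoneOn ψ (Ioi a))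
    (hψ_maps : MapsTo ψ (Ioi a) (Ici a)) :
    IntegrableOn (fun z => survival f (ψ z) * w z) (Ioi a) := by
  refine hw.bdd_mul (c := survival f a)
    (aestronglyMeasurable_survival_comp hint hnonneg hψ hψ_maps) ?_
  filter_upwards [ae_restrict_mem measurableSet_Ioi] with z hz
    using norm_survival_le hint hnonneg (hψ_maps hz)

lemma integrableOn_comp_mul_survival_comp_mul (hint : IntegrableOn f (Ioi 0))
    (hmean : IntegrableOn (fun z => z * f z) (Ioi 0)) (hnonneg : ∀ t ∈ Ioi (0 : ℝ), 0 ≤ f t)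
    (hψ : MonotoneOn ψ (Ioi 0)) (hψ_maps : MapsTo ψ (Ioi 0) (Ici 0)) :
    IntegrableOn (fun z => ψ z * survival f (ψ z) * f z) (Ioi 0) := by
  have hψ_meas : AEStronglyMeasurable ψ (volume.restrict (Ioi 0)) :=
    (aemeasurable_restrict_of_monotoneOn measurableSet_Ioi hψ).aestronglyMeasurable
  refine hint.bdd_mul (c := ∫ t in Ioi 0, t * f t)
    (hψ_meas.mul (aestronglyMeasurable_survival_comp hint hnonneg hψ hψ_maps)) ?_
  filter_upwards [ae_restrict_mem measurableSet_Ioi] with z hz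
  rw [norm_of_nonneg (mul_nonneg (hψ_maps hz) (survival_nonneg hnonneg (hψ_maps hz)))]
  exact mul_survival_le hmean hnonneg (hψ_maps hz)

end ReservePrice

section MinimumOfTwo

variable {f : ℝ → ℝ} {a : ℝ}

-- `2 f S` is the density of the minimum of two independent samples from `f`.
lemma survival_two_mul_mul_survival (hcont : ContinuousOn f (Ioi a))
    (hint : IntegrableOn f (Ioi a)) (hnonneg : ∀ t ∈ Ioi a, 0 ≤ f t) {z : ℝ} (haz : a ≤ z) :
    survival (fun t => 2 * (survival f t * f t)) z = survival f z ^ 2 := by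
  have hcontWithin : ContinuousWithinAt (fun t => -survival f t ^ 2) (Ici z) z :=
    ((((continuousOn_survival hint).mono (Ici_subset_Ici.2 haz)) z self_mem_Ici).pow 2).neg
  have hderiv : ∀ t ∈ Ioi z,
      HasDerivAt (fun t => -survival f t ^ 2) (2 * (survival f t * f t)) t := by
    intro t ht
    have hat : a < t := lt_of_le_of_lt haz ht
    have hS := hasDerivAt_survival hint hat (hcont.continuousAt (Ioi_mem_nhds hat))
    exact (hS.pow 2).neg.congr_deriv (by ring)
  have hderiv_nonneg : ∀ t ∈ Ioi z, 0 ≤ 2 * (survival f t * f t) := by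
    intro t ht
    have hat : a < t := lt_of_le_of_lt haz ht
    exact mul_nonneg zero_le_two (mul_nonneg (survival_nonneg hnonneg hat.le) (hnonneg t hat))
  have hlim : Filter.Tendsto (fun t => -survival f t ^ 2) Filter.atTop (nhds 0) := by
    simpa using (tendsto_survival_atTop (f := f).pow 2).neg
  rw [survival, integral_Ioi_of_hasDerivAt_of_nonneg hcontWithin hderiv hderiv_nonneg hlim]
  ring

lemma integrableOn_survival_mul (hint : IntegrableOn f (Ioi a))
    (hnonneg : ∀ t ∈ Ioi a, 0 ≤ f t) {w : ℝ → ℝ} (hw : IntegrableOn w (Ioi a)) :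
    IntegrableOn (fun z => survival f z * w z) (Ioi a) :=
  integrableOn_survival_comp_mul hint hnonneg hw monotoneOn_id Ioi_subset_Ici_self

lemma integrableOn_survival_sq (hint : IntegrableOn f (Ioi a))
    (hmean : IntegrableOn (fun z => (z - a) * f z) (Ioi a)) (hnonneg : ∀ t ∈ Ioi a, 0 ≤ f t) :
    IntegrableOn (fun z => survival f z ^ 2) (Ioi a) := by
  simp only [sq]
  exact integrableOn_survival_mul hint hnonneg
    (integrableOn_survival hint.aestronglyMeasurable hmean)

lemma integral_survival_sq (hcont : ContinuousOn f (Ioi a)) (hint : IntegrableOn f (Ioi a))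
    (hmean : IntegrableOn (fun z => (z - a) * f z) (Ioi a)) (hnonneg : ∀ t ∈ Ioi a, 0 ≤ f t) :
    ∫ z in Ioi a, survival f z ^ 2 = 2 * ∫ z in Ioi a, survival f z * ((z - a) * f z) := by
  have hmeas : AEStronglyMeasurable (fun z => 2 * (survival f z * f z))
      (volume.restrict (Ioi a)) :=
    ((integrableOn_survival_mul hint hnonneg hint).const_mul 2).aestronglyMeasurable
  have hrearrange : ∀ z, (z - a) * (2 * (survival f z * f z))
      = 2 * (survival f z * ((z - a) * f z)) := fun z => by ring
  have hmean_min : IntegrableOn (fun z => (z - a) * (2 * (survival f z * f z))) (Ioi a) := by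
    simp only [hrearrange]
    exact (integrableOn_survival_mul hint hnonneg hmean).const_mul 2
  calc ∫ z in Ioi a, survival f z ^ 2
      = ∫ z in Ioi a, survival (fun t => 2 * (survival f t * f t)) z :=
        setIntegral_congr_fun measurableSet_Ioi fun z hz =>
          (survival_two_mul_mul_survival hcont hint hnonneg (le_of_lt hz)).symm
    _ = ∫ z in Ioi a, (z - a) * (2 * (survival f z * f z)) := integral_survival hmeas hmean_min
    _ = 2 * ∫ z in Ioi a, survival f z * ((z - a) * f z) := by
        simp only [hrearrange, integral_const_mul]

end MinimumOfTwo

section MonotoneHazardRate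

variable {f : ℝ → ℝ} {a : ℝ}

lemma hasDerivAt_log_survival (hcont : ContinuousOn f (Ioi a)) (hint : IntegrableOn f (Ioi a))
    (hpos : ∀ t ∈ Ioi a, 0 < f t) {z : ℝ} (haz : a < z) :
    HasDerivAt (fun z => log (survival f z)) (-hazardRate f z) z := by
  have hderiv := hasDerivAt_survival hint haz (hcont.continuousAt (Ioi_mem_nhds haz))
  exact (hderiv.log (survival_pos hint hpos haz.le).ne').congr_deriv (neg_div _ _)

lemma concaveOn_log_survival (hcont : ContinuousOn f (Ioi a)) (hint : IntegrableOn f (Ioi a))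
    (hpos : ∀ t ∈ Ioi a, 0 < f t) (hmono : MonotoneOn (hazardRate f) (Ioi a)) :
    ConcaveOn ℝ (Ici a) fun z => log (survival f z) := by
  have hS : ∀ z ∈ Ici a, survival f z ≠ 0 := fun z hz => (survival_pos hint hpos hz).ne'
  have hderiv : ∀ z ∈ Ioi a, HasDerivAt (fun z => log (survival f z)) (-hazardRate f z) z :=
    fun z hz => hasDerivAt_log_survival hcont hint hpos hz
  refine AntitoneOn.concaveOn_of_deriv (convex_Ici a) ((continuousOn_survival hint).log hS) ?_ ?_
  · rw [interior_Ici]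
    exact fun z hz => (hderiv z hz).differentiableAt.differentiableWithinAt
  · rw [interior_Ici]
    exact hmono.neg.congr fun z hz => (hderiv z hz).deriv.symm

lemma survival_mul_survival_le_sq (hcont : ContinuousOn f (Ioi a)) (hint : IntegrableOn f (Ioi a))
    (hpos : ∀ t ∈ Ioi a, 0 < f t) (hmono : MonotoneOn (hazardRate f) (Ioi a))
    {x y : ℝ} (hx : a ≤ x) (hy : a ≤ y) :
    survival f x * survival f y ≤ survival f ((x + y) / 2) ^ 2 := by
  have hS : ∀ z, a ≤ z → 0 < survival f z := fun z hz => survival_pos hint hpos hz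
  have hm : 0 < survival f ((x + y) / 2) := hS _ (by linarith)
  have hconcave := (concaveOn_log_survival hcont hint hpos hmono).2 hx hy
    (by norm_num : (0 : ℝ) ≤ 1 / 2) (by norm_num : (0 : ℝ) ≤ 1 / 2) (by norm_num)
  rw [show (1 / 2 : ℝ) • x + (1 / 2 : ℝ) • y = (x + y) / 2 by simp only [smul_eq_mul]; ring]
    at hconcave
  simp only [smul_eq_mul] at hconcave
  rw [← log_le_log_iff (mul_pos (hS x hx) (hS y hy)) (pow_pos hm 2),
    log_mul (hS x hx).ne' (hS y hy).ne', log_pow]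
  push_cast
  linarith

lemma virtualValue_lt_self {p : ℝ} (hS : 0 < survival f p) (hf : 0 < f p) :
    virtualValue f p < p :=
  sub_lt_self p (div_pos hS hf)

lemma survival_virtualValue_le (hcont : ContinuousOn f (Ioi a)) (hint : IntegrableOn f (Ioi a))
    (hpos : ∀ t ∈ Ioi a, 0 < f t) (hmono : MonotoneOn (hazardRate f) (Ioi a))
    {p : ℝ} (hap : a < p) (hvirtual : a ≤ virtualValue f p) :
    survival f (virtualValue f p) ≤ exp 1 * survival f p := by
  have hS : ∀ z, a ≤ z → 0 < survival f z := fun z hz => survival_pos hint hpos hz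
  have hlt : virtualValue f p < p := virtualValue_lt_self (hS p hap.le) (hpos p hap)
  have hslope := (concaveOn_log_survival hcont hint hpos hmono).le_slope_of_hasDerivAt
    hvirtual hap.le hlt (hasDerivAt_log_survival hcont hint hpos hap)
  have hstep : hazardRate f p * (p - virtualValue f p) = 1 := by
    have := (hS p hap.le).ne'
    have := (hpos p hap).ne'
    rw [hazardRate, virtualValue]
    field_simp
    ring
  have hlog : log (survival f (virtualValue f p)) ≤ 1 + log (survival f p) := by
    rw [slope_def_field, le_div_iff₀ (sub_pos.2 hlt), neg_mul, hstep] at hslope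
    linarith
  rw [← log_le_log_iff (hS _ hvirtual) (mul_pos (exp_pos 1) (hS p hap.le)),
    log_mul (exp_ne_zero 1) (hS p hap.le).ne', log_exp]
  exact hlog

end MonotoneHazardRate

section Robustness

variable {f ψ : ℝ → ℝ}

lemma survival_mul_integral_mul_le (hcont : ContinuousOn f (Ioi 0)) (hint : IntegrableOn f (Ioi 0))
    (hmean : IntegrableOn (fun z => z * f z) (Ioi 0)) (hpos : ∀ t ∈ Ioi (0 : ℝ), 0 < f t)
    (hmono : MonotoneOn (hazardRate f) (Ioi 0)) :
    survival f 0 * ∫ z in Ioi 0, z * f z ≤ 4 * ∫ z in Ioi 0, survival f z * (z * f z) := by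
  have hnonneg : ∀ t ∈ Ioi (0 : ℝ), 0 ≤ f t := fun t ht => (hpos t ht).le
  have hmean' : IntegrableOn (fun z => (z - 0) * f z) (Ioi 0) := by
    simpa only [sub_zero] using hmean
  have hint_survival : IntegrableOn (survival f) (Ioi 0) :=
    integrableOn_survival hint.aestronglyMeasurable hmean'
  have hint_double : IntegrableOn (fun z => survival f 0 * survival f (2 * z)) (Ioi 0) := by
    refine Integrable.const_mul ?_ _
    rw [← IntegrableOn, integrableOn_Ioi_comp_mul_left_iff _ _ zero_lt_two, mul_zero]
    exact hint_survival
  have hdouble : ∀ z ∈ Ioi (0 : ℝ), survival f 0 * survival f (2 * z) ≤ survival f z ^ 2 := by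
    intro z hz
    have h2z : 0 ≤ 2 * z := mul_nonneg zero_le_two (le_of_lt hz)
    simpa only [zero_add, mul_div_cancel_left₀ z (two_ne_zero' ℝ)] using
      survival_mul_survival_le_sq hcont hint hpos hmono le_rfl h2z
  calc survival f 0 * ∫ z in Ioi 0, z * f z
      = survival f 0 * ∫ z in Ioi 0, survival f z := by
        rw [integral_survival hint.aestronglyMeasurable hmean']
        simp only [sub_zero]
    _ = 2 * ∫ z in Ioi 0, survival f 0 * survival f (2 * z) := by
        have hscale := integral_comp_mul_left_Ioi' (survival f) 0 zero_lt_two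
        rw [mul_zero, smul_eq_mul] at hscale
        rw [← hscale, integral_const_mul]
        ring
    _ ≤ 2 * ∫ z in Ioi 0, survival f z ^ 2 :=
        mul_le_mul_of_nonneg_left (setIntegral_mono_on hint_double
          (integrableOn_survival_sq hint hmean' hnonneg) measurableSet_Ioi hdouble) zero_le_two
    _ = 4 * ∫ z in Ioi 0, survival f z * (z * f z) := by
        rw [integral_survival_sq hcont hint hmean' hnonneg]
        simp only [sub_zero]
        ring

lemma integral_survival_mul_le (hcont : ContinuousOn f (Ioi 0)) (hint : IntegrableOn f (Ioi 0))
    (hmean : IntegrableOn (fun z => z * f z) (Ioi 0)) (hpos : ∀ t ∈ Ioi (0 : ℝ), 0 < f t)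
    (hmono : MonotoneOn (hazardRate f) (Ioi 0)) (hψ : MonotoneOn ψ (Ioi 0))
    (hψ_maps : MapsTo ψ (Ioi 0) (Ioi 0)) (hψ_inv : RightInvOn ψ (virtualValue f) (Ioi 0)) :
    ∫ z in Ioi 0, survival f z * (z * f z)
      ≤ exp 1 * ∫ z in Ioi 0, survival f (ψ z) * (z * f z) := by
  have hnonneg : ∀ t ∈ Ioi (0 : ℝ), 0 ≤ f t := fun t ht => (hpos t ht).le
  rw [← integral_const_mul]
  refine setIntegral_mono_on (integrableOn_survival_mul hint hnonneg hmean)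
    ((integrableOn_survival_comp_mul hint hnonneg hmean hψ
      (hψ_maps.mono_right Ioi_subset_Ici_self)).const_mul _) measurableSet_Ioi fun z hz => ?_
  have hS : survival f z ≤ exp 1 * survival f (ψ z) := by
    have hvirtual : virtualValue f (ψ z) = z := hψ_inv hz
    simpa only [hvirtual] using survival_virtualValue_le hcont hint hpos hmono (hψ_maps hz)
      (hvirtual.symm ▸ le_of_lt hz)
  rw [← mul_assoc (exp 1)]
  exact mul_le_mul_of_nonneg_right hS (mul_nonneg (le_of_lt hz) (hnonneg z hz))

lemma integral_survival_comp_mul_le (hint : IntegrableOn f (Ioi 0))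
    (hmean : IntegrableOn (fun z => z * f z) (Ioi 0)) (hnonneg : ∀ t ∈ Ioi (0 : ℝ), 0 ≤ f t)
    (hψ : MonotoneOn ψ (Ioi 0)) (hψ_le : ∀ z ∈ Ioi (0 : ℝ), z ≤ ψ z) :
    ∫ z in Ioi 0, survival f (ψ z) * (z * f z)
      ≤ ∫ z in Ioi 0, ψ z * survival f (ψ z) * f z := by
  have hψ_maps : MapsTo ψ (Ioi 0) (Ici 0) := fun z hz => (le_of_lt hz).trans (hψ_le z hz)
  refine setIntegral_mono_on (integrableOn_survival_comp_mul hint hnonneg hmean hψ hψ_maps)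
    (integrableOn_comp_mul_survival_comp_mul hint hmean hnonneg hψ hψ_maps)
    measurableSet_Ioi fun z hz => ?_
  calc survival f (ψ z) * (z * f z) = z * (survival f (ψ z) * f z) := by ring
    _ ≤ ψ z * (survival f (ψ z) * f z) := mul_le_mul_of_nonneg_right (hψ_le z hz)
        (mul_nonneg (survival_nonneg hnonneg (hψ_maps hz)) (hnonneg z hz))
    _ = ψ z * survival f (ψ z) * f z := (mul_assoc _ _ _).symm

lemma integral_mul_survival_sub_survival_comp_mul_le (hcont : ContinuousOn f (Ioi 0))
    (hint : IntegrableOn f (Ioi 0)) (hmean : IntegrableOn (fun z => z * f z) (Ioi 0))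
    (hpos : ∀ t ∈ Ici (0 : ℝ), 0 < f t) (hmono : MonotoneOn (hazardRate f) (Ioi 0))
    (hvirtual : MonotoneOn (virtualValue f) (Ici 0)) (hψ_mem : MapsTo ψ (Ioi 0) (Ici 0))
    (hψ_inv : RightInvOn ψ (virtualValue f) (Ioi 0)) :
    ∫ z in Ioi 0, z * (survival f 0 - survival f (ψ z)) * f z
      ≤ (4 * exp 1 - 1) * ∫ z in Ioi 0, ψ z * survival f (ψ z) * f z := by
  have hpos' : ∀ t ∈ Ioi (0 : ℝ), 0 < f t := fun t ht => hpos t (Ioi_subset_Ici_self ht)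
  have hnonneg : ∀ t ∈ Ioi (0 : ℝ), 0 ≤ f t := fun t ht => (hpos' t ht).le
  have hψ : MonotoneOn ψ (Ioi 0) :=
    Function.monotoneOn_of_rightInvOn_of_mapsTo hvirtual hψ_inv hψ_mem
  have hlt_ψ : ∀ z ∈ Ioi (0 : ℝ), z < ψ z := fun z hz =>
    (hψ_inv hz).symm.trans_lt (virtualValue_lt_self (survival_pos hint hpos' (hψ_mem hz))
      (hpos _ (hψ_mem hz)))
  have hψ_maps : MapsTo ψ (Ioi 0) (Ioi 0) := fun z hz => lt_trans hz (hlt_ψ z hz)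
  calc ∫ z in Ioi 0, z * (survival f 0 - survival f (ψ z)) * f z
      = ∫ z in Ioi 0, (survival f 0 * (z * f z) - survival f (ψ z) * (z * f z)) :=
        integral_congr_ae (.of_forall fun z => by ring)
    _ = survival f 0 * (∫ z in Ioi 0, z * f z) - ∫ z in Ioi 0, survival f (ψ z) * (z * f z) := by
        rw [integral_sub (hmean.const_mul _) (integrableOn_survival_comp_mul hint hnonneg hmean hψ
          hψ_mem), integral_const_mul]
    _ ≤ (4 * exp 1 - 1) * ∫ z in Ioi 0, survival f (ψ z) * (z * f z) := by
        linarith [survival_mul_integral_mul_le hcont hint hmean hpos' hmono,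
          integral_survival_mul_le hcont hint hmean hpos' hmono hψ hψ_maps hψ_inv]
    _ ≤ (4 * exp 1 - 1) * ∫ z in Ioi 0, ψ z * survival f (ψ z) * f z :=
        mul_le_mul_of_nonneg_left (integral_survival_comp_mul_le hint hmean hnonneg hψ
          fun z hz => (hlt_ψ z hz).le)
          (by linarith [one_le_exp zero_le_one])

end Robustness

theorem stmt_6
(f F : ℝ → ℝ)
    (hf_cont : ContinuousOn f (Ici 0))
    (hf_pos : ∀ z ∈ Ici (0:ℝ), 0 < f z)
    (hF : ∀ z ∈ Ici (0:ℝ), F z = ∫ t in (0:ℝ)..z, f t)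
    (hF_lt : ∀ z ∈ Ici (0:ℝ), F z < 1)
    (hprob : ∫ z in Ioi (0:ℝ), f z = 1)
(hMHR : ∀ y z : ℝ, 0 ≤ y → y ≤ z → f y / (1 - F y) ≤ f z / (1 - F z))
(φ ψ : ℝ → ℝ)
    (hφ : ∀ z ∈ Ici (0:ℝ), φ z = z - (1 - F z) / f z)
    (hφ_mono : StrictMonoOn φ (Ici 0))
    (hφ_top : Filter.Tendsto φ Filter.atTop Filter.atTop)
    (hψ : ∀ y ∈ Ici (0:ℝ), ψ y ∈ Ici (0:ℝ) ∧ φ (ψ y) = y)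
(hmean : IntegrableOn (fun z => z * f z) (Ioi 0)) :
    (∫ z in Ioi (0:ℝ), ψ z * (1 - F (ψ z)) * f z)
      + (∫ z in Ioi (0:ℝ), z * F (ψ z) * f z)
    ≤ 4 * Real.exp 1 * ∫ z in Ioi (0:ℝ), ψ z * (1 - F (ψ z)) * f z := by
  have hint : IntegrableOn f (Ioi 0) := Integrable.of_integral_ne_zero (hprob.symm ▸ one_ne_zero)
  have hsub : Ioi (0 : ℝ) ⊆ Ici 0 := Ioi_subset_Ici_self
  have hF_eq : ∀ z ∈ Ici (0 : ℝ), F z = survival f 0 - survival f z := fun z hz => by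
    rw [hF z hz, survival_eq_sub_intervalIntegral hint hz, sub_sub_cancel]
  have hS_eq : ∀ z ∈ Ici (0 : ℝ), 1 - F z = survival f z := fun z hz => by
    rw [hF_eq z hz, survival, hprob, sub_sub_cancel]
  have hmono : MonotoneOn (hazardRate f) (Ioi 0) := fun y hy z hz hyz => by
    simpa only [hazardRate, hS_eq y (hsub hy), hS_eq z (hsub hz)] using hMHR y z (hsub hy) hyz
  have hφ_eq : EqOn φ (virtualValue f) (Ici 0) := fun z hz => by
    rw [hφ z hz, hS_eq z hz, virtualValue]
  have hψ_mem : MapsTo ψ (Ioi 0) (Ici 0) := fun z hz => (hψ z (hsub hz)).1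
  have hψ_inv : RightInvOn ψ (virtualValue f) (Ioi 0) := fun z hz =>
    (hφ_eq (hψ_mem hz)).symm.trans (hψ z (hsub hz)).2
  have hstrategic : ∫ z in Ioi 0, ψ z * (1 - F (ψ z)) * f z
      = ∫ z in Ioi 0, ψ z * survival f (ψ z) * f z :=
    setIntegral_congr_fun measurableSet_Ioi fun z hz =>
      congrArg (ψ z * · * f z) (hS_eq _ (hψ_mem hz))
  have hhonest : ∫ z in Ioi 0, z * F (ψ z) * f z
      = ∫ z in Ioi 0, z * (survival f 0 - survival f (ψ z)) * f z :=
    setIntegral_congr_fun measurableSet_Ioi fun z hz =>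
      congrArg (z * · * f z) (hF_eq _ (hψ_mem hz))
  rw [hstrategic, hhonest]
  linarith [integral_mul_survival_sub_survival_comp_mul_le (hf_cont.mono hsub) hint hmean hf_pos
    hmono (hφ_mono.monotoneOn.congr hφ_eq) hψ_mem hψ_inv]
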